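/- Let (r_n)_{n∈ℕ} be a sequence of positive integers satisfying: (i) for every irrational α the sequence (r_n·α) is uniformly distributed mod 1, i.e. for every nonzero integer m one has (1/N)·Σ_{n=1}^N e(m·r_n·α) → 0 as N → ∞; and (ii) for every d ∈ ℕ the set {n ∈ ℕ : d divides r_n} has positive upper density. Then the set R = {r₁, r₂, …} is a set of recurrence. -/

import Mathlib

open Filter MeasureTheory

/-- `e(x) = exp(2πix)`. -/
noncomputable def eFun (x : ℝ) : ℂ := Complex.exp (2 * Real.pi * Complex.I * x)

/-- The upper density of a set of natural numbers. -/
noncomputable def upperDensityNat (S : Set ℕ) : ℝ :=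
  letI := Classical.decPred fun n : ℕ => n ∈ S
  limsup (fun N : ℕ => (((Finset.range N).filter fun n => n ∈ S).card : ℝ) / N) atTop

/-- A set `R` of integers is a set of `ℓ`-recurrence if for every invertible measure
preserving system `(X, ℬ, μ, T)` and every measurable set `A` with `μ(A) > 0` there is a
nonzero `r ∈ R` with `μ(A ∩ T^{-r}A ∩ T^{-2r}A ∩ … ∩ T^{-ℓr}A) > 0`. -/
def IsSetOfMultRecurrence (ℓ : ℕ) (R : Set ℤ) : Prop :=
  ∀ (X : Type) (_ : MeasurableSpace X) (μ : Measure X),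
    IsProbabilityMeasure μ →
    ∀ T : X ≃ᵐ X, MeasurePreserving (⇑T) μ μ →
    ∀ A : Set X, MeasurableSet A → 0 < μ A →
      ∃ r ∈ R, r ≠ 0 ∧
        0 < μ (⋂ i ∈ Finset.range (ℓ + 1), (⇑(T.toEquiv ^ ((i : ℤ) * r))) ⁻¹' A)

/-!
Let `σ` be the spectral measure of the indicator of `A` for the Koopman operator of `T`: a measure
on the circle with `∫ zᵏ ∂σ = μ (A ∩ T⁻ᵏ A)` for all `k`, which has an atom of mass at least
`μ(A)²` at `1`. Choose `d` divisible enough that the roots of unity `z` with `zᵈ ≠ 1` carry less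
than that mass, and average `z ^ r n` over the `n < N` with `d ∣ r n`. Where `zᵈ = 1` the average
equals the proportion of such `n`. Where `z` is not a root of unity it tends to `0`, by
equidistribution of the rotates of `z` by `d`-th roots of unity. If `R` were not a set of
recurrence, then every `∫ z ^ r n ∂σ` would vanish, and the atom at `1` would force that proportion
to tend to `0`.
-/

/-! ### Averages along a set of indices -/

/-- The proportion of elements of `S` among the first `N` natural numbers. -/
noncomputable def partialDensity (S : Set ℕ) (N : ℕ) : ℝ :=
  (N : ℝ)⁻¹ * ∑ n ∈ Finset.range N, S.indicator 1 n

/-- The average of `z ^ r n` over `n < N`, in which the terms with `n ∉ S` are replaced by `0`. -/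
noncomputable def weylAverage (r : ℕ → ℤ) (S : Set ℕ) (N : ℕ) (z : Circle) : ℂ :=
  (N : ℂ)⁻¹ * ∑ n ∈ Finset.range N, S.indicator (fun n => (z : ℂ) ^ r n) n

theorem upperDensityNat_eq_limsup_partialDensity (S : Set ℕ) :
    upperDensityNat S = limsup (partialDensity S) atTop := by
  classical
  refine congrArg (limsup · atTop) (funext fun N => ?_)
  rw [partialDensity, div_eq_inv_mul, Finset.card_filter]
  push_cast
  simp only [Set.indicator_apply, Pi.one_apply]

theorem partialDensity_nonneg (S : Set ℕ) (N : ℕ) : 0 ≤ partialDensity S N :=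
  mul_nonneg (by positivity)
    (Finset.sum_nonneg fun n _ => Set.indicator_nonneg (fun _ _ => zero_le_one) n)

theorem partialDensity_le_one (S : Set ℕ) (N : ℕ) : partialDensity S N ≤ 1 := by
  have hsum : ∑ n ∈ Finset.range N, S.indicator (1 : ℕ → ℝ) n ≤ N := by
    simpa using Finset.sum_le_card_nsmul (Finset.range N) (S.indicator 1) (1 : ℝ) fun n _ =>
      Set.indicator_le_self' (fun _ _ => zero_le_one) n
  exact inv_mul_le_one_of_le₀ hsum N.cast_nonneg

theorem continuous_coe_zpow (k : ℤ) : Continuous fun z : Circle => (z : ℂ) ^ k := by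
  simp only [← Circle.coe_zpow]
  exact continuous_subtype_val.comp (continuous_zpow k)

section WeylAverage

variable (r : ℕ → ℤ) (S : Set ℕ) (N : ℕ)

theorem continuous_weylAverage : Continuous (weylAverage r S N) := by
  refine continuous_const.mul (continuous_finsetSum _ fun n _ => ?_)
  by_cases hn : n ∈ S <;> simp [hn, continuous_coe_zpow, continuous_const]

theorem norm_weylAverage_le (z : Circle) : ‖weylAverage r S N z‖ ≤ partialDensity S N := by
  rw [weylAverage, partialDensity, norm_mul, norm_inv, Complex.norm_natCast]
  gcongr
  refine norm_sum_le_of_le _ fun n _ => ?_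
  simp only [norm_indicator_eq_indicator_norm, norm_zpow, Circle.norm_coe, one_zpow]
  rfl

variable {r S}

theorem weylAverage_of_pow_eq_one {d : ℕ} (hS : ∀ n ∈ S, (d : ℤ) ∣ r n) {z : Circle}
    (hz : z ^ d = 1) : weylAverage r S N z = partialDensity S N := by
  have hterm (n : ℕ) (hn : n ∈ S) : (z : ℂ) ^ r n = 1 := by
    obtain ⟨k, hk⟩ := hS n hn
    rw [← Circle.coe_zpow, hk, zpow_mul, zpow_natCast, hz, one_zpow, Circle.coe_one]
  rw [weylAverage, partialDensity]
  push_cast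
  congr 2 with n
  by_cases hn : n ∈ S <;> simp [hn, hterm]

theorem integrable_coe_zpow [MeasurableSpace Circle] [BorelSpace Circle] (σ : Measure Circle)
    [IsFiniteMeasure σ] (k : ℤ) : Integrable (fun z : Circle => (z : ℂ) ^ k) σ :=
  .of_bound (continuous_coe_zpow k).aestronglyMeasurable 1
    (.of_forall fun z => by rw [norm_zpow, Circle.norm_coe, one_zpow])

theorem integral_weylAverage_eq_zero [MeasurableSpace Circle] [BorelSpace Circle]
    {σ : Measure Circle} [IsFiniteMeasure σ] (hσ : ∀ n ∈ S, ∫ z : Circle, (z : ℂ) ^ r n ∂σ = 0) :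
    ∫ z, weylAverage r S N z ∂σ = 0 := by
  simp only [weylAverage]
  rw [integral_const_mul, integral_finsetSum]
  · refine mul_eq_zero_of_right _ (Finset.sum_eq_zero fun n _ => ?_)
    by_cases hn : n ∈ S <;> simp [hn, hσ]
  · intro n _
    by_cases hn : n ∈ S <;> simp [hn, integrable_coe_zpow]

end WeylAverage

/-! ### Equidistribution on the circle -/

theorem eFun_eq_fourierChar (x : ℝ) : eFun x = Real.fourierChar x := by
  rw [eFun, Real.fourierChar_apply]
  push_cast
  ring_nf

theorem isOfFinOrder_fourierChar_ratCast (q : ℚ) : IsOfFinOrder (Real.fourierChar (q : ℝ)) := by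
  refine isOfFinOrder_iff_pow_eq_one.2 ⟨q.den, q.den_pos, ?_⟩
  have hq : q.den • (q : ℝ) = q.num := by
    rw [nsmul_eq_mul]
    exact_mod_cast q.den_mul_eq_num
  rw [← AddChar.map_nsmul_eq_pow, hq, Real.fourierChar_apply', Circle.exp_two_pi_mul_int]

theorem fourierChar_surjective : Function.Surjective Real.fourierChar := fun z => by
  obtain ⟨x, rfl⟩ := Circle.exp_surjective z
  refine ⟨x / (2 * Real.pi), ?_⟩
  rw [Real.fourierChar_apply', mul_div_cancel₀ _ Real.two_pi_pos.ne']

theorem tendsto_weylAverage_univ {r : ℕ → ℤ}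
    (h_ud : ∀ α : ℝ, Irrational α →
      Tendsto (fun N : ℕ => (N : ℂ)⁻¹ * ∑ n ∈ Finset.range N, eFun (r n * α)) atTop (nhds 0))
    {z : Circle} (hz : ¬IsOfFinOrder z) :
    Tendsto (fun N => weylAverage r Set.univ N z) atTop (nhds 0) := by
  obtain ⟨α, rfl⟩ := fourierChar_surjective z
  have hα : Irrational α := by
    rintro ⟨q, rfl⟩
    exact hz (isOfFinOrder_fourierChar_ratCast q)
  refine (h_ud α hα).congr fun N => ?_
  simp only [weylAverage, Set.indicator_univ, eFun_eq_fourierChar, ← zsmul_eq_mul,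
    AddChar.map_zsmul_eq_zpow, Circle.coe_zpow]

theorem sum_toCircle_zpow (d : ℕ) [NeZero d] (k : ℤ) :
    ∑ j : ZMod d, (ZMod.toCircle j : ℂ) ^ k = if (d : ℤ) ∣ k then (d : ℂ) else 0 := by
  have h := AddChar.sum_mulShift (k : ZMod d) (ZMod.isPrimitive_stdAddChar d)
  simp_rw [mul_comm _ (k : ZMod d), ← zsmul_eq_mul, AddChar.map_zsmul_eq_zpow,
    ZMod.intCast_zmod_eq_zero_iff_dvd, ZMod.card] at h
  simpa [ZMod.stdAddChar_apply] using h

theorem weylAverage_setOf_dvd (r : ℕ → ℤ) (d : ℕ) [NeZero d] (N : ℕ) (z : Circle) :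
    weylAverage r {n | (d : ℤ) ∣ r n} N z =
      (d : ℂ)⁻¹ * ∑ j : ZMod d, weylAverage r Set.univ N (z * ZMod.toCircle j) := by
  simp only [weylAverage, Set.indicator_univ, ← Finset.mul_sum]
  rw [Finset.sum_comm, mul_left_comm, Finset.mul_sum (a := (d : ℂ)⁻¹)]
  congr 2 with n
  simp only [Circle.coe_mul, mul_zpow, ← Finset.mul_sum, sum_toCircle_zpow, Set.indicator_apply,
    Set.mem_ofPred_eq]
  split_ifs <;> simp [mul_comm, NeZero.ne]

theorem isOfFinOrder_toCircle {d : ℕ} [NeZero d] (j : ZMod d) : IsOfFinOrder (ZMod.toCircle j) := by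
  refine isOfFinOrder_iff_pow_eq_one.2 ⟨d, NeZero.pos d, ?_⟩
  rw [← AddChar.map_nsmul_eq_pow, nsmul_eq_mul, ZMod.natCast_self, zero_mul,
    AddChar.map_zero_eq_one]

theorem tendsto_weylAverage_setOf_dvd {r : ℕ → ℤ}
    (hr : ∀ z : Circle, ¬IsOfFinOrder z →
      Tendsto (fun N => weylAverage r Set.univ N z) atTop (nhds 0))
    (d : ℕ) [NeZero d] {z : Circle} (hz : ¬IsOfFinOrder z) :
    Tendsto (fun N => weylAverage r {n | (d : ℤ) ∣ r n} N z) atTop (nhds 0) := by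
  have hrot (j : ZMod d) : ¬IsOfFinOrder (z * ZMod.toCircle j) := fun h =>
    hz (by simpa using h.mul (isOfFinOrder_toCircle j).inv)
  simp only [weylAverage_setOf_dvd]
  simpa using (tendsto_finsetSum Finset.univ fun j _ => hr _ (hrot j)).const_mul (d : ℂ)⁻¹

/-! ### The mass of the torsion elements -/

section Torsion

variable (G : Type*) [Monoid G]

/-- The elements of finite order whose order does not divide `d`. -/
def torsionNotDvd (d : ℕ) : Set G := {z | IsOfFinOrder z ∧ z ^ d ≠ 1}

theorem antitone_torsionNotDvd_factorial : Antitone fun k : ℕ => torsionNotDvd G k.factorial := by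
  rintro k l hkl z ⟨hz, hl⟩
  exact ⟨hz, fun hk => hl (orderOf_dvd_iff_pow_eq_one.1
    ((orderOf_dvd_of_pow_eq_one hk).trans (Nat.factorial_dvd_factorial hkl)))⟩

theorem iInter_torsionNotDvd_factorial : ⋂ k : ℕ, torsionNotDvd G k.factorial = ∅ := by
  refine Set.eq_empty_of_forall_notMem fun z hz => ?_
  rw [Set.mem_iInter] at hz
  have hpos : 0 < orderOf z := (hz 0).1.orderOf_pos
  exact (hz (orderOf z)).2 (orderOf_dvd_iff_pow_eq_one.1 (Nat.dvd_factorial hpos le_rfl))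

variable [MeasurableSpace G] [MeasurablePow G ℕ] [MeasurableSingletonClass G]

theorem measurableSet_pow_eq_one (d : ℕ) : MeasurableSet {z : G | z ^ d = 1} :=
  measurable_id.pow_const d (measurableSet_singleton 1)

theorem measurableSet_isOfFinOrder : MeasurableSet {z : G | IsOfFinOrder z} := by
  simp only [isOfFinOrder_iff_pow_eq_one, Set.ofPred_exists, Set.ofPred_and]
  exact .iUnion fun n => (MeasurableSet.const _).inter (measurableSet_pow_eq_one G n)

theorem measurableSet_torsionNotDvd (d : ℕ) : MeasurableSet (torsionNotDvd G d) :=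
  (measurableSet_isOfFinOrder G).inter (measurableSet_pow_eq_one G d).compl

variable {G}

theorem exists_measureReal_torsionNotDvd_lt (σ : Measure G) [IsFiniteMeasure σ] {ε : ℝ}
    (hε : 0 < ε) : ∃ d : ℕ, 0 < d ∧ σ.real (torsionNotDvd G d) < ε := by
  have hlim := tendsto_measure_iInter_atTop (μ := σ)
    (fun k => (measurableSet_torsionNotDvd G k.factorial).nullMeasurableSet)
    (antitone_torsionNotDvd_factorial G) ⟨0, measure_ne_top σ _⟩
  rw [iInter_torsionNotDvd_factorial, measure_empty] at hlim
  have hlim_real := (ENNReal.tendsto_toReal ENNReal.zero_ne_top).comp hlim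
  obtain ⟨k, hk⟩ := (hlim_real.eventually_lt_const (u := ε) (by simpa using hε)).exists
  exact ⟨_, k.factorial_pos, hk⟩

theorem integral_eq_pow_eq_one_add_torsionNotDvd_add_compl {E : Type*} [NormedAddCommGroup E]
    [NormedSpace ℝ E] {σ : Measure G} {f : G → E} (hf : Integrable f σ) {d : ℕ} (hd : 0 < d) :
    ∫ z, f z ∂σ = ∫ z in {z | z ^ d = 1}, f z ∂σ + ∫ z in torsionNotDvd G d, f z ∂σ +
      ∫ z in {z | IsOfFinOrder z}ᶜ, f z ∂σ := by
  have hsub : {z : G | z ^ d = 1} ⊆ {z | IsOfFinOrder z} := fun z hz =>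
    isOfFinOrder_iff_pow_eq_one.2 ⟨d, hd, hz⟩
  rw [← integral_add_compl (measurableSet_isOfFinOrder G) hf,
    ← integral_inter_add_sdiff (measurableSet_pow_eq_one G d) hf.integrableOn,
    Set.inter_eq_self_of_subset_right hsub]
  rfl

end Torsion

/-! ### A density bound from vanishing moments -/

section VanishingMoments

variable [MeasurableSpace Circle] [BorelSpace Circle] {σ : Measure Circle}
  [IsFiniteMeasure σ] {r : ℕ → ℤ} {S : Set ℕ}

theorem integrable_weylAverage (N : ℕ) : Integrable (weylAverage r S N) σ :=
  .of_bound (continuous_weylAverage r S N).aestronglyMeasurable _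
    (.of_forall (norm_weylAverage_le r S N))

theorem tendsto_setIntegral_weylAverage
    (hlim : ∀ z : Circle, ¬IsOfFinOrder z → Tendsto (fun N => weylAverage r S N z) atTop (nhds 0)) :
    Tendsto (fun N => ∫ z in {z | IsOfFinOrder z}ᶜ, weylAverage r S N z ∂σ) atTop (nhds 0) := by
  rw [← integral_zero Circle ℂ (μ := σ.restrict {z | IsOfFinOrder z}ᶜ)]
  exact tendsto_integral_of_dominated_convergence (fun _ => 1)
    (fun N => (continuous_weylAverage r S N).aestronglyMeasurable) (integrable_const _)
    (fun N => .of_forall fun z => (norm_weylAverage_le r S N z).trans (partialDensity_le_one S N))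
    (ae_restrict_of_forall_mem (measurableSet_isOfFinOrder Circle).compl hlim)

theorem partialDensity_mul_le_norm_setIntegral {d : ℕ} (hd : 0 < d)
    (hS : ∀ n ∈ S, (d : ℤ) ∣ r n) (hσ : ∀ n ∈ S, ∫ z : Circle, (z : ℂ) ^ r n ∂σ = 0) (N : ℕ) :
    partialDensity S N * (σ.real {z | z ^ d = 1} - σ.real (torsionNotDvd Circle d)) ≤
      ‖∫ z in {z | IsOfFinOrder z}ᶜ, weylAverage r S N z ∂σ‖ := by
  set I := ∫ z in {z | IsOfFinOrder z}ᶜ, weylAverage r S N z ∂σ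
  set J := ∫ z in torsionNotDvd Circle d, weylAverage r S N z ∂σ
  have hmain : ∫ z in {z | z ^ d = 1}, weylAverage r S N z ∂σ =
      (partialDensity S N * σ.real {z | z ^ d = 1} : ℝ) := by
    rw [setIntegral_congr_fun (measurableSet_pow_eq_one Circle d) fun z hz =>
      weylAverage_of_pow_eq_one N hS hz, setIntegral_const, Complex.real_smul]
    push_cast
    ring
  have hJ : ‖J‖ ≤ partialDensity S N * σ.real (torsionNotDvd Circle d) :=
    norm_setIntegral_le_of_norm_le_const (measure_lt_top _ _) fun z _ =>
      norm_weylAverage_le r S N z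
  have hsum := integral_eq_pow_eq_one_add_torsionNotDvd_add_compl
    (integrable_weylAverage (σ := σ) (r := r) (S := S) N) hd
  rw [integral_weylAverage_eq_zero N hσ, hmain, add_assoc] at hsum
  have hbound : partialDensity S N * σ.real {z | z ^ d = 1} ≤ ‖J‖ + ‖I‖ :=
    calc partialDensity S N * σ.real {z | z ^ d = 1}
      _ = ‖((partialDensity S N * σ.real {z | z ^ d = 1} : ℝ) : ℂ)‖ :=
        (Complex.norm_of_nonneg
          (mul_nonneg (partialDensity_nonneg S N) measureReal_nonneg)).symm
      _ = ‖J + I‖ := by rw [eq_neg_of_add_eq_zero_left hsum.symm, norm_neg]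
      _ ≤ ‖J‖ + ‖I‖ := norm_add_le J I
  linarith

theorem tendsto_partialDensity_zero
    (hlim : ∀ z : Circle, ¬IsOfFinOrder z → Tendsto (fun N => weylAverage r S N z) atTop (nhds 0))
    {d : ℕ} (hd : 0 < d) (hS : ∀ n ∈ S, (d : ℤ) ∣ r n)
    (hσ : ∀ n ∈ S, ∫ z : Circle, (z : ℂ) ^ r n ∂σ = 0)
    (hlt : σ.real (torsionNotDvd Circle d) < σ.real {z | z ^ d = 1}) :
    Tendsto (partialDensity S) atTop (nhds 0) := by
  have hnorm := (tendsto_setIntegral_weylAverage (σ := σ) hlim).norm.div_const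
    (σ.real {z | z ^ d = 1} - σ.real (torsionNotDvd Circle d))
  rw [norm_zero, zero_div] at hnorm
  exact squeeze_zero (partialDensity_nonneg S) (fun N => (le_div_iff₀ (sub_pos.2 hlt)).2
    (partialDensity_mul_le_norm_setIntegral hd hS hσ N)) hnorm

end VanishingMoments

/-! ### Spectral measures -/

section SpectralMeasure

open scoped ComplexOrder CompactlySupported InnerProductSpace

section Riesz

variable {X : Type*} [TopologicalSpace X] [CompactSpace X]

/-- The restriction of a positive functional on complex continuous functions to the real ones, in
the form to which the Riesz-Markov-Kakutani theorem applies. -/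
noncomputable def realPositiveFunctional (φ : C(X, ℂ) →ₚ[ℂ] ℂ) : C_c(X, ℝ) →ₚ[ℝ] ℝ :=
  PositiveLinearMap.mk₀
    { toFun g := (φ ((g : C(X, ℝ)).realToRCLike ℂ)).re
      map_add' g h := by
        rw [← Complex.add_re, ← map_add]
        congr 2
        ext
        simp
      map_smul' c g := by
        have hsmul : ((c • g : C_c(X, ℝ)) : C(X, ℝ)).realToRCLike ℂ =
            (c : ℂ) • (g : C(X, ℝ)).realToRCLike ℂ := by
          ext
          simp
        rw [hsmul, map_smul]
        simp }
    fun g hg => (Complex.le_def.1 (map_nonneg φ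
      (show 0 ≤ (g : C(X, ℝ)).realToRCLike ℂ from fun x => Complex.zero_le_real.2 (hg x)))).1

theorem exists_measure_integral_eq [T2Space X] [MeasurableSpace X] [BorelSpace X]
    (φ : C(X, ℂ) →ₚ[ℂ] ℂ) :
    ∃ σ : Measure X, IsFiniteMeasure σ ∧ ∀ f : C(X, ℂ), ∫ x, f x ∂σ = φ f := by
  let σ := RealRMK.rieszMeasure (realPositiveFunctional φ)
  have hreal (g : C(X, ℝ)) : ((∫ x, g x ∂σ : ℝ) : ℂ) = φ (g.realToRCLike ℂ) := by
    have hself : IsSelfAdjoint (φ (g.realToRCLike ℂ)) :=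
      (ContinuousMap.isSelfAdjoint_realToRCLike ℂ).map' φ
    rw [← Complex.conj_eq_iff_re.1 hself]
    exact congrArg _ (RealRMK.integral_rieszMeasure (realPositiveFunctional φ)
      (CompactlySupportedContinuousMap.continuousMapEquiv g))
  refine ⟨σ, inferInstance, fun f => ?_⟩
  let u : C(X, ℝ) := ⟨fun x => (f x).re, by fun_prop⟩
  let v : C(X, ℝ) := ⟨fun x => (f x).im, by fun_prop⟩
  have hf : f = u.realToRCLike ℂ + Complex.I • v.realToRCLike ℂ := by
    ext x
    simp [u, v, mul_comm Complex.I, Complex.re_add_im]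
  have hint : Integrable f σ :=
    f.continuous.integrable_of_hasCompactSupport (HasCompactSupport.of_compactSpace f)
  calc ∫ x, f x ∂σ
    _ = (∫ x, u x ∂σ : ℝ) + (∫ x, v x ∂σ : ℝ) * Complex.I := (integral_re_add_im hint).symm
    _ = φ f := by rw [hreal, hreal, mul_comm, ← smul_eq_mul, ← map_smul, ← map_add, ← hf]

end Riesz

theorem map_coe_zpow_of_map_coe_eq {A B F : Type*} [Monoid A] [StarMul A] [Monoid B] [StarMul B]
    [FunLike F A B] [MonoidHomClass F A B] [StarHomClass F A B] {φ : F} {u : unitary A}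
    {v : unitary B} (h : φ u = v) (n : ℤ) : φ (u ^ n : unitary A) = (v ^ n : unitary B) := by
  let Φ := Unitary.map ({ (φ : A →* B) with map_star' := map_star φ } : A →⋆* B)
  have hΦ : Φ u = v := Subtype.ext h
  exact congrArg Subtype.val (show Φ (u ^ n) = v ^ n by rw [map_zpow, hΦ])

theorem circle_coe_mem_unitary (z : Circle) : (z : ℂ) ∈ unitary ℂ :=
  Unitary.mem_iff_self_mul_star.2 ((Complex.mul_conj _).trans (by rw [Circle.normSq_coe]; rfl))

/-- The inclusion of the circle into `ℂ`, as a unitary of the algebra of continuous functions. -/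
def circleCoordinate : unitary C(Circle, ℂ) where
  val := ⟨(↑), by fun_prop⟩
  property := ⟨ContinuousMap.ext fun z => (circle_coe_mem_unitary z).1,
    ContinuousMap.ext fun z => (circle_coe_mem_unitary z).2⟩

theorem circleCoordinate_zpow_apply (n : ℤ) (z : Circle) :
    (circleCoordinate ^ n : unitary C(Circle, ℂ)).1 z = (z : ℂ) ^ n :=
  (map_coe_zpow_of_map_coe_eq (φ := ContinuousMap.evalStarAlgHom ℂ ℂ z)
    (u := circleCoordinate) (v := ⟨(z : ℂ), circle_coe_mem_unitary z⟩) rfl n).trans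
    (Unitary.coe_zpow _ n)

variable {H : Type*} [NormedAddCommGroup H] [InnerProductSpace ℂ H] [CompleteSpace H]

/-- The functional `a ↦ ⟪ξ, Φ a ξ⟫` attached to a vector `ξ` and a representation `Φ` of an ordered
star algebra on a Hilbert space. -/
noncomputable def vectorFunctional {A : Type*} [Ring A] [StarRing A] [Algebra ℂ A] [PartialOrder A]
    [StarOrderedRing A] (Φ : A →⋆ₐ[ℂ] (H →L[ℂ] H)) (ξ : H) : A →ₚ[ℂ] ℂ :=
  PositiveLinearMap.mk₀
    { toFun a := ⟪ξ, Φ a ξ⟫_ℂ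
      map_add' a b := by rw [map_add, add_apply, inner_add_right]
      map_smul' c a := by
        rw [map_smul, smul_apply, inner_smul_right, RingHom.id_apply, smul_eq_mul] }
    fun _ ha => ((ContinuousLinearMap.nonneg_iff_isPositive _).1
      (map_nonneg Φ ha)).inner_nonneg_right ξ

/-- The continuous functional calculus of a unitary operator, for functions on the circle. -/
noncomputable def circleFunctionalCalculus (U : unitary (H →L[ℂ] H)) :
    C(Circle, ℂ) →⋆ₐ[ℂ] (H →L[ℂ] H) :=
  (cfcHom (R := ℂ) (p := IsStarNormal) (inferInstance : IsStarNormal (U : H →L[ℂ] H))).comp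
    (ContinuousMap.compStarAlgHom' ℂ ℂ
      ⟨fun z => ⟨z, mem_sphere_zero_iff_norm.2 (spectrum.norm_eq_one_of_unitary U.2 z.2)⟩,
        by fun_prop⟩)

theorem circleFunctionalCalculus_zpow (U : unitary (H →L[ℂ] H)) (n : ℤ) :
    circleFunctionalCalculus U (circleCoordinate ^ n : unitary C(Circle, ℂ)) =
      (U ^ n : unitary (H →L[ℂ] H)) :=
  map_coe_zpow_of_map_coe_eq (cfcHom_id _) n

theorem zpow_apply_of_apply_eq_self {U : unitary (H →L[ℂ] H)} {u : H} (hu : U.1 u = u) (n : ℤ) :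
    (U ^ n).1 u = u :=
  (MulAction.stabilizer (unitary (H →L[ℂ] H)) u).zpow_mem (show U • u = u from hu) n

theorem inner_zpow_apply_sub_inner_smul {U : unitary (H →L[ℂ] H)} {u : H} (hu : U.1 u = u)
    (hu_norm : ‖u‖ = 1) (ξ : H) (n : ℤ) :
    ⟪ξ - ⟪u, ξ⟫_ℂ • u, (U ^ n).1 (ξ - ⟪u, ξ⟫_ℂ • u)⟫_ℂ = ⟪ξ, (U ^ n).1 ξ⟫_ℂ - ‖⟪u, ξ⟫_ℂ‖ ^ 2 := by
  have hfix : (U ^ n).1 u = u := zpow_apply_of_apply_eq_self hu n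
  have hinner : ⟪u, (U ^ n).1 ξ⟫_ℂ = ⟪u, ξ⟫_ℂ := by
    nth_rw 1 [← hfix]
    exact Unitary.inner_map_map (U ^ n) u ξ
  have hself : ⟪u, u⟫_ℂ = 1 := inner_self_eq_one_of_norm_eq_one hu_norm
  rw [map_sub, map_smul, hfix, inner_sub_left, inner_sub_right, inner_sub_right, inner_smul_left,
    inner_smul_left, inner_smul_right, inner_smul_right, hinner, hself, ← inner_conj_symm ξ u,
    ← Complex.mul_conj']
  ring

variable [MeasurableSpace Circle] [BorelSpace Circle]

theorem exists_measure_integral_zpow_eq_inner (U : unitary (H →L[ℂ] H)) (ξ : H) :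
    ∃ σ : Measure Circle, IsFiniteMeasure σ ∧
      ∀ n : ℤ, ∫ z : Circle, (z : ℂ) ^ n ∂σ = ⟪ξ, (U ^ n).1 ξ⟫_ℂ := by
  obtain ⟨σ, hσ, h⟩ :=
    exists_measure_integral_eq (vectorFunctional (circleFunctionalCalculus U) ξ)
  refine ⟨σ, hσ, fun n => ?_⟩
  simp only [← circleCoordinate_zpow_apply, h, ← circleFunctionalCalculus_zpow]
  rfl

/-- The spectral theorem is applied to the component of `ξ` orthogonal to `u`; the component along
`u`, which `U` fixes, contributes the atom `‖⟪u, ξ⟫‖² δ₁`. -/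
theorem exists_measure_integral_zpow_eq_inner_of_apply_eq_self {U : unitary (H →L[ℂ] H)} {u : H}
    (hu : U.1 u = u) (hu_norm : ‖u‖ = 1) (ξ : H) :
    ∃ σ : Measure Circle, IsFiniteMeasure σ ∧ ‖⟪u, ξ⟫_ℂ‖ ^ 2 ≤ σ.real {1} ∧
      ∀ n : ℤ, ∫ z : Circle, (z : ℂ) ^ n ∂σ = ⟪ξ, (U ^ n).1 ξ⟫_ℂ := by
  obtain ⟨τ, hτ, h⟩ := exists_measure_integral_zpow_eq_inner U (ξ - ⟪u, ξ⟫_ℂ • u)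
  set m : NNReal := ‖⟪u, ξ⟫_ℂ‖₊ ^ 2
  refine ⟨τ + m • .dirac 1, inferInstance, ?_, fun n => ?_⟩
  · rw [measureReal_add_apply, measureReal_nnreal_smul_apply]
    simp [m, Measure.real]
  · rw [integral_add_measure (integrable_coe_zpow τ n) (integrable_coe_zpow _ n),
      integral_smul_nnreal_measure, integral_dirac, h, inner_zpow_apply_sub_inner_smul hu hu_norm]
    simp [m, NNReal.smul_def]

end SpectralMeasure

/-! ### The Koopman operator -/

section Koopman

variable {X : Type*} [MeasurableSpace X] {μ : Measure X}

theorem measurePreserving_zpow {T : X ≃ᵐ X} (hT : MeasurePreserving T μ μ) (n : ℤ) :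
    MeasurePreserving (T.toEquiv ^ n) μ μ := by
  induction n with
  | zero => exact .id μ
  | succ n ih =>
    rw [zpow_add_one]
    exact ih.comp hT
  | pred n ih =>
    rw [zpow_sub_one]
    exact ih.comp (hT.symm T)

theorem compMeasurePreserving_compMeasurePreserving_symm {Y E : Type*} [MeasurableSpace Y]
    {ν : Measure Y} [NormedAddCommGroup E] {p : ENNReal} (T : X ≃ᵐ Y)
    (hT : MeasurePreserving T μ ν) (g : Lp E p μ) :
    Lp.compMeasurePreserving T hT (Lp.compMeasurePreserving T.symm (hT.symm T) g) = g := by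
  rw [← Lp.compMeasurePreserving_comp_apply]
  simp

/-- The unitary operator `g ↦ g ∘ T` on `L²(μ)`. -/
noncomputable def koopman (T : X ≃ᵐ X) (hT : MeasurePreserving T μ μ) :
    unitary (Lp ℂ 2 μ →L[ℂ] Lp ℂ 2 μ) :=
  Unitary.linearIsometryEquiv.symm <|
    .ofSurjective (Lp.compMeasurePreservingₗᵢ ℂ T hT) fun g =>
      ⟨_, compMeasurePreserving_compMeasurePreserving_symm T hT g⟩

theorem koopman_inv (T : X ≃ᵐ X) (hT : MeasurePreserving T μ μ) :
    (koopman T hT)⁻¹ = koopman T.symm (hT.symm T) := by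
  refine inv_eq_of_mul_eq_one_right (Subtype.ext (ContinuousLinearMap.ext fun g => ?_))
  exact compMeasurePreserving_compMeasurePreserving_symm T hT g

theorem koopman_zpow_apply (T : X ≃ᵐ X) (hT : MeasurePreserving T μ μ) (n : ℤ) (g : Lp ℂ 2 μ) :
    (koopman T hT ^ n).1 g =
      Lp.compMeasurePreserving (T.toEquiv ^ n) (measurePreserving_zpow hT n) g := by
  induction n generalizing g with
  | zero => simp
  | succ n ih =>
    rw [zpow_add_one]
    refine (ih _).trans ((Lp.compMeasurePreserving_comp_apply g hT _).symm.trans ?_)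
    simp only [← mul_self_zpow]
    rfl
  | pred n ih =>
    rw [zpow_sub_one, koopman_inv]
    refine (ih _).trans ((Lp.compMeasurePreserving_comp_apply g (hT.symm T) _).symm.trans ?_)
    simp only [sub_eq_neg_add, zpow_add, zpow_neg_one]
    rfl

theorem koopman_indicatorConstLp_univ [IsFiniteMeasure μ] (T : X ≃ᵐ X)
    (hT : MeasurePreserving T μ μ) (c : ℂ) :
    (koopman T hT).1 (indicatorConstLp 2 .univ (measure_ne_top μ _) c) =
      indicatorConstLp 2 .univ (measure_ne_top μ _) c :=
  rfl

theorem inner_koopman_zpow_indicatorConstLp [IsFiniteMeasure μ] (T : X ≃ᵐ X)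
    (hT : MeasurePreserving T μ μ) {A : Set X} (hA : MeasurableSet A) (n : ℤ) :
    inner ℂ (indicatorConstLp 2 hA (measure_ne_top μ _) (1 : ℂ))
      ((koopman T hT ^ n).1 (indicatorConstLp 2 hA (measure_ne_top μ _) 1)) =
      (μ.real (A ∩ (T.toEquiv ^ n) ⁻¹' A) : ℂ) := by
  rw [koopman_zpow_apply, Lp.indicatorConstLp_compMeasurePreserving,
    L2.inner_indicatorConstLp_one_indicatorConstLp_one]
  rfl

theorem exists_measure_integral_zpow_eq_measureReal_inter [MeasurableSpace Circle]
    [BorelSpace Circle] [IsProbabilityMeasure μ] {T : X ≃ᵐ X} (hT : MeasurePreserving T μ μ)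
    {A : Set X} (hA : MeasurableSet A) :
    ∃ σ : Measure Circle, IsFiniteMeasure σ ∧ μ.real A ^ 2 ≤ σ.real {1} ∧
      ∀ n : ℤ, ∫ z : Circle, (z : ℂ) ^ n ∂σ = μ.real (A ∩ (T.toEquiv ^ n) ⁻¹' A) := by
  have hnorm : ‖indicatorConstLp 2 .univ (measure_ne_top μ .univ) (1 : ℂ)‖ = 1 := by
    rw [norm_indicatorConstLp two_ne_zero ENNReal.ofNat_ne_top, norm_one, probReal_univ,
      Real.one_rpow, one_mul]
  obtain ⟨σ, hσ, hatom, h⟩ := exists_measure_integral_zpow_eq_inner_of_apply_eq_self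
    (koopman_indicatorConstLp_univ T hT 1) hnorm
    (indicatorConstLp 2 hA (measure_ne_top μ A) 1)
  refine ⟨σ, hσ, ?_, fun n => (h n).trans (inner_koopman_zpow_indicatorConstLp T hT hA n)⟩
  rw [L2.inner_indicatorConstLp_one_indicatorConstLp_one, Set.univ_inter] at hatom
  simpa using hatom

end Koopman

theorem biInter_range_two_preimage_zpow {X : Type*} (T : Equiv.Perm X) (A : Set X) (k : ℤ) :
    ⋂ i ∈ Finset.range 2, (T ^ ((i : ℤ) * k)) ⁻¹' A = A ∩ (T ^ k) ⁻¹' A := by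
  ext x
  simp [Finset.range_add_one, and_comm]

theorem statement10_general (r : ℕ → ℤ) (hr : ∀ n, r n ≠ 0)
    (h_ud : ∀ α : ℝ, Irrational α →
      Tendsto (fun N : ℕ => (N : ℂ)⁻¹ * ∑ n ∈ Finset.range N, eFun (r n * α)) atTop (nhds 0))
    (h_div : ∀ d : ℕ, 0 < d → 0 < upperDensityNat {n | (d : ℤ) ∣ r n}) :
    IsSetOfMultRecurrence 1 (Set.range r) := by
  intro X _ μ _ T hT A hA hμA
  by_contra! hcon
  let _ : MeasurableSpace Circle := borel Circle
  have : BorelSpace Circle := ⟨rfl⟩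
  obtain ⟨σ, _, hatom, hσ⟩ := exists_measure_integral_zpow_eq_measureReal_inter hT hA
  have hμA_sq : 0 < μ.real A ^ 2 := pow_pos (ENNReal.toReal_pos hμA.ne' (measure_ne_top μ A)) 2
  have hvanish (n : ℕ) : ∫ z : Circle, (z : ℂ) ^ r n ∂σ = 0 := by
    have hnull := nonpos_iff_eq_zero.1 (hcon (r n) ⟨n, rfl⟩ (hr n))
    rw [biInter_range_two_preimage_zpow] at hnull
    rw [hσ, measureReal_def, hnull, ENNReal.toReal_zero, Complex.ofReal_zero]
  obtain ⟨d, hd, hlt⟩ := exists_measureReal_torsionNotDvd_lt σ hμA_sq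
  have : NeZero d := ⟨hd.ne'⟩
  have hatom_le : σ.real {1} ≤ σ.real {z | z ^ d = 1} :=
    measureReal_mono (Set.singleton_subset_iff.2 (one_pow d))
  have hdensity := tendsto_partialDensity_zero
    (fun _ => tendsto_weylAverage_setOf_dvd (fun _ => tendsto_weylAverage_univ h_ud) d) hd
    (fun _ => id) (fun n _ => hvanish n) (hlt.trans_le (hatom.trans hatom_le))
  exact (h_div d hd).ne' ((upperDensityNat_eq_limsup_partialDensity _).trans hdensity.limsup_eq)

theorem statement10 (r : ℕ → ℕ) (hpos : ∀ n, 0 < r n)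
    (h_ud : ∀ α : ℝ, Irrational α → ∀ m : ℤ, m ≠ 0 →
      Tendsto (fun N : ℕ => (N : ℂ)⁻¹ *
          ∑ n ∈ Finset.range N, eFun ((m : ℝ) * (r n : ℝ) * α))
        atTop (nhds 0))
    (h_div : ∀ d : ℕ, 0 < d → 0 < upperDensityNat {n : ℕ | d ∣ r n}) :
    IsSetOfMultRecurrence 1 (Set.range fun n => (r n : ℤ)) :=
  statement10_general _ (fun n => by exact_mod_cast (hpos n).ne')
    (fun α hα => by simpa using h_ud α hα 1 one_ne_zero)
    (fun d hd => by simpa [Int.natCast_dvd_natCast] using h_div d hd)
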